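/- Let Δ be a finite ranked signature with a projective yield function whose terminal alphabet contains the letters a, b, c, d. Let C_1, C_2, C_3, C_4 be contexts and t_5 a term over Δ, and set t = C_1[C_2[C_3[C_4[t_5]]]] and t' = C_1[C_3[t_5]]. Assume count_a(yield(t)) = count_c(yield(t)), count_b(yield(t)) = count_d(yield(t)), count_a(yield(t')) = count_c(yield(t')), and count_b(yield(t')) = count_d(yield(t')). Let s = leftc(C_2)·leftc(C_4)·rightc(C_4)·rightc(C_2). Then count_a(s) = count_c(s) and count_b(s) = count_d(s). -/

import Mathlib

/-- Terms over a ranked signature `Δ` with arity function `ar`. -/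
inductive PTerm (Δ : Type*) (ar : Δ → ℕ) : Type _
  | node (f : Δ) (ts : Fin (ar f) → PTerm Δ ar) : PTerm Δ ar

variable {Δ : Type*} {ar : Δ → ℕ} {σ : Type*}

/-- Yield of a term, given a yield function on symbols: `yield (f(t_1,…,t_k))` is
`Y f` with each variable `x_i` replaced by the yield of `t_i`. -/
def PTerm.yield (Y : ∀ f : Δ, List (σ ⊕ Fin (ar f))) : PTerm Δ ar → List σ
  | .node f ts => (Y f).flatMap fun s => match s with
      | .inl a => [a]
      | .inr i => (ts i).yield Y

/-- Projectivity: in `Y f`, each variable occurs exactly once, and the variables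
occur in the order `x_1, …, x_k` from left to right. -/
def Projective (Y : ∀ f : Δ, List (σ ⊕ Fin (ar f))) : Prop :=
  ∀ f : Δ, (Y f).filterMap Sum.getRight? = List.ofFn (fun i : Fin (ar f) => i)

/-- One-hole contexts over `Δ`: either the hole, or a node whose `i`-th child is
again a context (the others being terms; the value `ts i` is irrelevant). -/
inductive Ctx (Δ : Type*) (ar : Δ → ℕ) : Type _
  | hole : Ctx Δ ar
  | node (f : Δ) (i : Fin (ar f)) (C : Ctx Δ ar) (ts : Fin (ar f) → PTerm Δ ar) : Ctx Δ ar

/-- `C.subst t` plugs the term `t` into the hole of the context `C`. -/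
def Ctx.subst : Ctx Δ ar → PTerm Δ ar → PTerm Δ ar
  | .hole, t => t
  | .node f i C ts, t => .node f fun j => if j = i then C.subst t else ts j

/-- Yield of a context, with `none` marking the hole. -/
def Ctx.cyield (Y : ∀ f : Δ, List (σ ⊕ Fin (ar f))) : Ctx Δ ar → List (Option σ)
  | .hole => [none]
  | .node f i C ts => (Y f).flatMap fun s => match s with
      | .inl a => [some a]
      | .inr j => if j = i then C.cyield Y else ((ts j).yield Y).map some

/-- The part of the yield of a context to the left of the hole. -/
def Ctx.leftc (Y : ∀ f : Δ, List (σ ⊕ Fin (ar f))) (C : Ctx Δ ar) : List σ :=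
  ((C.cyield Y).takeWhile fun o => o.isSome).reduceOption

/-- The part of the yield of a context to the right of the hole. -/
def Ctx.rightc (Y : ∀ f : Δ, List (σ ⊕ Fin (ar f))) (C : Ctx Δ ar) : List σ :=
  (((C.cyield Y).dropWhile fun o => o.isSome).tail).reduceOption

/-- `yield(C) = leftc(C) · rightc(C)`. -/
def Ctx.yieldc (Y : ∀ f : Δ, List (σ ⊕ Fin (ar f))) (C : Ctx Δ ar) : List σ :=
  C.leftc Y ++ C.rightc Y

/-- Height of a term: 1 plus the maximum height of the children. -/
def PTerm.height : PTerm Δ ar → ℕ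
  | .node _ ts => 1 + Finset.univ.sup fun i => (ts i).height

/-- Height of a context, viewed as a term (the hole is a nullary node). -/
def Ctx.height : Ctx Δ ar → ℕ
  | .hole => 1
  | .node _ i C ts =>
      1 + max C.height (Finset.univ.sup fun j => if j = i then 0 else (ts j).height)

/-- `Subtree s t`: `s` is a subtree of `t` (a term rooted at a node of `t`). -/
inductive Subtree : PTerm Δ ar → PTerm Δ ar → Prop
  | refl (t : PTerm Δ ar) : Subtree t t
  | child {s : PTerm Δ ar} (f : Δ) (ts : Fin (ar f) → PTerm Δ ar) (i : Fin (ar f)) :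
      Subtree s (ts i) → Subtree s (.node f ts)

/-- `StrictSubtree s t`: `s` is a subtree of a child of `t`. -/
def StrictSubtree (s t : PTerm Δ ar) : Prop :=
  ∃ (f : Δ) (ts : Fin (ar f) → PTerm Δ ar) (i : Fin (ar f)),
    t = PTerm.node f ts ∧ Subtree s (ts i)

/-- `t.Pos p`: the list of child indices `p` is (the address of) a node of `t`. -/
inductive PTerm.Pos : PTerm Δ ar → List ℕ → Prop
  | nil (t : PTerm Δ ar) : Pos t []
  | cons (f : Δ) (ts : Fin (ar f) → PTerm Δ ar) (i : Fin (ar f)) {p : List ℕ} :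
      Pos (ts i) p → Pos (.node f ts) (i.val :: p)

/-- The address of the hole of a context. -/
def Ctx.holePath : Ctx Δ ar → List ℕ
  | .hole => []
  | .node _ i C _ => i.val :: C.holePath

/-- Sum, over the nodes of a term, of a weight attached to the node labels
(e.g. the number of `z`-labelled edges contributed by each node). -/
def PTerm.esum (w : Δ → ℕ) : PTerm Δ ar → ℕ
  | .node f ts => w f + Finset.univ.sum fun i => (ts i).esum w

/-- `(D_x, D_0, t_y)` is an `x,y,l`-separation of `t`. -/
def IsSep [DecidableEq σ] (Y : ∀ f : Δ, List (σ ⊕ Fin (ar f))) (x y : σ) (l : ℕ)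
    (t : PTerm Δ ar) (Dx D0 : Ctx Δ ar) (ty : PTerm Δ ar) : Prop :=
  t = Dx.subst (D0.subst ty) ∧ (Dx.yieldc Y).count y = 0 ∧
    (D0.yieldc Y).count x ≤ l ∧ (ty.yield Y).count x = 0

/-- `t` is `x,y,l`-separated. -/
def Separated [DecidableEq σ] (Y : ∀ f : Δ, List (σ ⊕ Fin (ar f))) (x y : σ) (l : ℕ)
    (t : PTerm Δ ar) : Prop :=
  ∃ Dx D0 ty, IsSep Y x y l t Dx D0 ty

/-- The four-letter alphabet `{a, b, c, d}`. -/
inductive ABCD | a | b | c | d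
deriving DecidableEq

theorem aux_flatMap_some {α : Type*} (g : α → List (Option σ)) (A : List α)
    (h : ∀ x ∈ A, ∃ l : List σ, g x = l.map some) :
    ∃ l : List σ, A.flatMap g = l.map some := by
  induction A with
  | nil => exact ⟨[], rfl⟩
  | cons x A ih =>
    obtain ⟨l, hl⟩ := ih fun j hj => h j (List.mem_cons_of_mem _ hj)
    obtain ⟨m, hm⟩ := h x List.mem_cons_self
    exact ⟨m ++ l, by rw [List.flatMap_cons, hl]; simp [hm]⟩

theorem aux_split {Y : ∀ f : Δ, List (σ ⊕ Fin (ar f))} (hY : Projective Y) (f : Δ)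
    (i : Fin (ar f)) : ∃ A B, Y f = A ++ Sum.inr i :: B ∧ Sum.inr i ∉ A ∧ Sum.inr i ∉ B := by
  have h := hY f
  have hm : i ∈ (Y f).filterMap Sum.getRight? := by rw [h]; simp
  have hn : ((Y f).filterMap Sum.getRight?).Nodup := by
    rw [h]; exact List.nodup_ofFn.2 fun _ _ h => h
  have hm' : Sum.inr i ∈ Y f := by
    obtain ⟨x, hx, hxi⟩ := List.mem_filterMap.1 hm
    rcases x with x | x <;> simp at hxi
    subst hxi; exact hx
  obtain ⟨A, B, hAB⟩ := List.append_of_mem hm'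
  refine ⟨A, B, hAB, ?_, ?_⟩
  · intro hA
    rw [hAB, List.filterMap_append] at hn
    exact (List.nodup_append.1 hn).2.2 i (List.mem_filterMap.2 ⟨_, hA, rfl⟩) i
      (List.mem_filterMap.2 ⟨_, List.mem_cons_self, rfl⟩) rfl
  · intro hB
    rw [hAB, List.filterMap_append] at hn
    have := (List.nodup_append.1 hn).2.1
    rw [List.filterMap_cons_some (f := Sum.getRight?) (a := Sum.inr i) (b := i) rfl] at this
    exact (List.nodup_cons.1 this).1 (List.mem_filterMap.2 ⟨_, hB, rfl⟩)

theorem aux_cyield {Y : ∀ f : Δ, List (σ ⊕ Fin (ar f))} (hY : Projective Y) (C : Ctx Δ ar) :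
    ∃ l r : List σ, C.cyield Y = l.map some ++ none :: r.map some := by
  induction C with
  | hole => exact ⟨[], [], rfl⟩
  | node f i C ts ih =>
    obtain ⟨l, r, hlr⟩ := ih
    obtain ⟨A, B, hAB, hA, hB⟩ := aux_split hY f i
    rw [Ctx.cyield, hAB, List.flatMap_append, List.flatMap_cons]
    have key : ∀ D : List (σ ⊕ Fin (ar f)), Sum.inr i ∉ D → ∀ x ∈ D,
        ∃ l : List σ, (match x with
          | .inl a => [some a]
          | .inr j => if j = i then C.cyield Y else ((ts j).yield Y).map some :
            List (Option σ)) = l.map some := by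
      intro D hD x hx
      rcases x with a | j
      · exact ⟨[a], rfl⟩
      · have : j ≠ i := by rintro rfl; exact hD hx
        exact ⟨(ts j).yield Y, by simp [this]⟩
    obtain ⟨p, hp⟩ := aux_flatMap_some _ A (key A hA)
    obtain ⟨q, hq⟩ := aux_flatMap_some _ B (key B hB)
    refine ⟨p ++ l, r ++ q, ?_⟩
    refine (congrArg₂ (· ++ ·) hp (congrArg₂ (· ++ ·) rfl hq)).trans ?_
    simp [hlr]

theorem aux_lr {Y : ∀ f : Δ, List (σ ⊕ Fin (ar f))} (hY : Projective Y) (C : Ctx Δ ar) :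
    C.cyield Y = (C.leftc Y).map some ++ none :: (C.rightc Y).map some := by
  obtain ⟨l, r, h⟩ := aux_cyield hY C
  have hred : ∀ m : List σ, (m.map some).reduceOption = m := by
    intro m; simp [List.reduceOption, List.filterMap_map]
  have hl : C.leftc Y = l := by
    rw [Ctx.leftc, h, List.takeWhile_append_of_pos (by simp)]
    simp [hred]
  have hr : C.rightc Y = r := by
    rw [Ctx.rightc, h, List.dropWhile_append_of_pos (by simp)]
    simp [hred]
  rw [hl, hr, h]

theorem aux_subst (Y : ∀ f : Δ, List (σ ⊕ Fin (ar f))) (C : Ctx Δ ar) (t : PTerm Δ ar) :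
    (C.subst t).yield Y = (C.cyield Y).flatMap fun o => o.elim (t.yield Y) fun a => [a] := by
  induction C with
  | hole => simp [Ctx.subst, Ctx.cyield]
  | node f i C ts ih =>
    rw [Ctx.subst, PTerm.yield, Ctx.cyield, List.flatMap_assoc]
    congr 1
    funext s
    rcases s with a | j
    · simp
    · by_cases hj : j = i
      · simp [hj, ih]
      · simp [hj, List.flatMap_map]

theorem aux_yield {Y : ∀ f : Δ, List (σ ⊕ Fin (ar f))} (hY : Projective Y) (C : Ctx Δ ar)
    (t : PTerm Δ ar) : (C.subst t).yield Y = C.leftc Y ++ t.yield Y ++ C.rightc Y := by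
  rw [aux_subst, aux_lr hY]
  simp [List.flatMap_map]

/-- with `t = C₁[C₂[C₃[C₄[t₅]]]]`, `t' = C₁[C₃[t₅]]` and
`s = leftc(C₂)·leftc(C₄)·rightc(C₄)·rightc(C₂)`, the count hypotheses on `t` and `t'`
imply `count_a(s) = count_c(s)` and `count_b(s) = count_d(s)`. -/
theorem statement6 {Δ : Type*} {ar : Δ → ℕ} {σ : Type*} [DecidableEq σ]
    (Y : ∀ f : Δ, List (σ ⊕ Fin (ar f))) (hY : Projective Y)
    (a b c d : σ) (hdist : ([a, b, c, d] : List σ).Nodup)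
    (C₁ C₂ C₃ C₄ : Ctx Δ ar) (t₅ : PTerm Δ ar)
    (t t' : PTerm Δ ar)
    (ht : t = C₁.subst (C₂.subst (C₃.subst (C₄.subst t₅))))
    (ht' : t' = C₁.subst (C₃.subst t₅))
    (hac : (t.yield Y).count a = (t.yield Y).count c)
    (hbd : (t.yield Y).count b = (t.yield Y).count d)
    (hac' : (t'.yield Y).count a = (t'.yield Y).count c)
    (hbd' : (t'.yield Y).count b = (t'.yield Y).count d)
    (s : List σ)
    (hs : s = C₂.leftc Y ++ C₄.leftc Y ++ C₄.rightc Y ++ C₂.rightc Y) :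
    s.count a = s.count c ∧ s.count b = s.count d := by
  subst ht ht' hs
  simp only [aux_yield hY, List.count_append] at *
  constructor <;> omega
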